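/- Let {X_t}_{t≥1} be a stationary binary Markov chain with parameters (a, b), 0 < a, b < 1, a ≠ b, stationary distribution (π₀, π₁) = (b/(a+b), a/(a+b)), ℓ = log₂(a/b), 0 < D < min(π₀, π₁), μ_D = h₂(π₁) − h₂(D), and J_n(D) = Σ_{t=1}^n ȷ(X_t, D) with ȷ(x,D) = −log₂ π_x − h₂(D). Then (J_n(D) − n·μ_D)/√n converges in distribution as n → ∞ to the centered Gaussian law N(0, V_sl), where V_sl = (a·b·(2 − a − b)/(a + b)³)·(log₂(a/b))² > 0; the limit does not depend on D. -/

import Mathlib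

open MeasureTheory

/-- Stationary distribution of the binary Markov chain with parameters `(a, b)`:
`π₀ = b/(a+b)`, `π₁ = a/(a+b)` (state `1` encoded as `true`). -/
noncomputable def statDist (a b : ℝ) (x : Bool) : ℝ :=
  if x then a / (a + b) else b / (a + b)

/-- Transition probabilities of the binary Markov chain:
`P₀₀ = 1-a`, `P₀₁ = a`, `P₁₀ = b`, `P₁₁ = 1-b`. -/
def transProb (a b : ℝ) (x y : Bool) : ℝ :=
  if x then (if y then 1 - b else b) else (if y then a else 1 - a)

/-- `X` is a stationary binary Markov chain with parameters `(a, b)` under `μ`: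
every finite path `(x_0, …, x_n)` has probability
`π_{x_0} ∏_{t=0}^{n-1} P_{x_t x_{t+1}}`. -/
def IsStatBinMarkov {Ω : Type*} [MeasurableSpace Ω] (μ : Measure Ω)
    (X : ℕ → Ω → Bool) (a b : ℝ) : Prop :=
  ∀ (n : ℕ) (x : Fin (n + 1) → Bool),
    μ {ω | ∀ t : Fin (n + 1), X t ω = x t}
      = ENNReal.ofReal
          (statDist a b (x 0) * ∏ t : Fin n, transProb a b (x t.castSucc) (x t.succ))


/-- The binary entropy function in bits. -/
noncomputable def binEntropy2 (p : ℝ) : ℝ :=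
  -p * Real.logb 2 p - (1 - p) * Real.logb 2 (1 - p)

/-- The single-letter d-tilted information of the binary Hamming problem:
`ȷ(x, D) = -log₂ π_x - h₂(D)`. -/
noncomputable def jTilt (a b D : ℝ) (x : Bool) : ℝ :=
  -Real.logb 2 (statDist a b x) - binEntropy2 D

/-- Transfer operator of the chain with multiplicative weight `z`. -/
noncomputable def transfer (a b : ℝ) (z : Bool → ℂ) (f : Bool → ℂ) (x : Bool) : ℂ :=
  z x * ((transProb a b x false : ℂ) * f false + (transProb a b x true : ℂ) * f true)

lemma transfer_norm_le {a b : ℝ} (ha0 : 0 < a) (ha1 : a < 1) (hb0 : 0 < b) (hb1 : b < 1)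
    {z : Bool → ℂ} (hz : ∀ x, ‖z x‖ = 1) {f : Bool → ℂ} {K : ℝ} (hf : ∀ x, ‖f x‖ ≤ K) (x : Bool) :
    ‖transfer a b z f x‖ ≤ K := by
  have key : ∀ p q : ℝ, 0 ≤ p → 0 ≤ q → p + q = 1 →
      ‖z x * ((p : ℂ) * f false + (q : ℂ) * f true)‖ ≤ K := by
    intro p q hp hq hpq
    rw [norm_mul, hz, one_mul]
    refine (norm_add_le _ _).trans ?_
    rw [norm_mul, norm_mul, Complex.norm_of_nonneg hp, Complex.norm_of_nonneg hq]
    calc p * ‖f false‖ + q * ‖f true‖ ≤ p * K + q * K := by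
          gcongr <;> exact hf _
      _ = K := by rw [← add_mul, hpq, one_mul]
  unfold transfer
  apply key <;> cases x <;> simp [transProb] <;> linarith

lemma transfer_iter_close {a b : ℝ} (ha0 : 0 < a) (ha1 : a < 1) (hb0 : 0 < b) (hb1 : b < 1)
    {z : Bool → ℂ} (hz : ∀ x, ‖z x‖ = 1) {w : Bool → ℂ} {lam : ℂ} {ε δ : ℝ}
    (hlam : ‖lam‖ ≤ 1) (hε : ∀ x, ‖transfer a b z w x - lam * w x‖ ≤ ε)
    (hδ : ∀ x, ‖1 - w x‖ ≤ δ) (n : ℕ) (x : Bool) :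
    ‖(transfer a b z)^[n] (fun _ => 1) x - lam ^ n * w x‖ ≤ n * ε + δ := by
  induction n generalizing x with
  | zero => simpa using hδ x
  | succ n ih =>
    have h1 : (transfer a b z)^[n + 1] (fun _ => 1) x - lam ^ (n + 1) * w x
        = transfer a b z (fun y => (transfer a b z)^[n] (fun _ => 1) y - lam ^ n * w y) x
          + lam ^ n * (transfer a b z w x - lam * w x) := by
      rw [Function.iterate_succ_apply']
      simp only [transfer]
      ring
    rw [h1]
    refine (norm_add_le _ _).trans ?_
    have h2 := transfer_norm_le ha0 ha1 hb0 hb1 hz ih x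
    have h3 : ‖lam ^ n * (transfer a b z w x - lam * w x)‖ ≤ ε := by
      rw [norm_mul, norm_pow]
      calc _ ≤ 1 * ‖transfer a b z w x - lam * w x‖ := by
            gcongr
            exact pow_le_one₀ (norm_nonneg _) hlam
        _ ≤ ε := by rw [one_mul]; exact hε x
    push_cast
    linarith

lemma transfer_path (a b : ℝ) (z : Bool → ℂ) (n : ℕ) (x0 : Bool) :
    (transfer a b z)^[n + 1] (fun _ => 1) x0 =
      (∑ x : Fin n → Bool, (∏ t : Fin n, (transProb a b
        ((Fin.cons x0 x : Fin (n + 1) → Bool) t.castSucc)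
        ((Fin.cons x0 x : Fin (n + 1) → Bool) t.succ) : ℂ)) *
        ∏ t : Fin (n + 1), z ((Fin.cons x0 x : Fin (n + 1) → Bool) t)) := by
  induction n generalizing x0 with
  | zero =>
    cases x0 <;> simp [transfer, transProb]
  | succ n ih =>
    rw [Function.iterate_succ_apply']
    simp only [transfer]
    rw [ih, ih, ← (Fin.consEquiv (fun _ : Fin (n + 1) => Bool)).sum_comp, Fintype.sum_prod_type,
      Fintype.sum_bool]
    simp only [Fin.consEquiv, Equiv.coe_fn_mk]
    rw [add_comm, mul_add, Finset.mul_sum, Finset.mul_sum, Finset.mul_sum, Finset.mul_sum]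
    congr 1 <;>
    · refine Finset.sum_congr rfl fun x _ => ?_
      conv_rhs => rw [Fin.prod_univ_succ, Fin.prod_univ_succ (n := n + 1)]
      simp only [Fin.castSucc_zero, Fin.cons_zero, Fin.cons_succ, Fin.castSucc_succ]
      ring

lemma statDist_nonneg {a b : ℝ} (ha0 : 0 < a) (hb0 : 0 < b) (x : Bool) : 0 ≤ statDist a b x := by
  unfold statDist; split <;> positivity

lemma transProb_nonneg {a b : ℝ} (ha0 : 0 < a) (ha1 : a < 1) (hb0 : 0 < b) (hb1 : b < 1)
    (x y : Bool) : 0 ≤ transProb a b x y := by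
  unfold transProb; split <;> split <;> linarith

lemma integral_prod_eq {Ω : Type*} [MeasurableSpace Ω] (μ : Measure Ω) [IsProbabilityMeasure μ]
    {a b : ℝ} (ha0 : 0 < a) (ha1 : a < 1) (hb0 : 0 < b) (hb1 : b < 1)
    (X : ℕ → Ω → Bool) (hX : ∀ t, Measurable (X t))
    (hM : IsStatBinMarkov μ X a b) (z : Bool → ℂ) (n : ℕ) :
    ∫ ω, ∏ t ∈ Finset.range (n + 1), z (X t ω) ∂μ =
      statDist a b true * (transfer a b z)^[n + 1] (fun _ => 1) true +
      statDist a b false * (transfer a b z)^[n + 1] (fun _ => 1) false := by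
  set Y : Ω → (Fin (n + 1) → Bool) := fun ω t => X t ω with hY
  have hYm : Measurable Y := measurable_pi_lambda _ fun t => hX t
  have h1 : ∫ ω, ∏ t ∈ Finset.range (n + 1), z (X t ω) ∂μ
      = ∫ x, ∏ t, z (x t) ∂(μ.map Y) := by
    rw [integral_map hYm.aemeasurable (by
      exact (measurable_of_finite _).aestronglyMeasurable)]
    simp [hY, Finset.prod_range]
  have : IsProbabilityMeasure (μ.map Y) := Measure.isProbabilityMeasure_map hYm.aemeasurable
  rw [h1, integral_fintype (Integrable.of_finite)]
  have h2 : ∀ x : Fin (n + 1) → Bool, (μ.map Y).real {x} =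
      statDist a b (x 0) * ∏ t : Fin n, transProb a b (x t.castSucc) (x t.succ) := by
    intro x
    rw [measureReal_def, Measure.map_apply hYm (measurableSet_singleton x)]
    have : Y ⁻¹' {x} = {ω | ∀ t : Fin (n + 1), X t ω = x t} := by
      ext ω
      simp [hY, funext_iff]
    rw [this, hM n x, ENNReal.toReal_ofReal]
    exact mul_nonneg (statDist_nonneg ha0 hb0 _)
      (Finset.prod_nonneg fun t _ => transProb_nonneg ha0 ha1 hb0 hb1 _ _)
  simp only [h2]
  rw [← (Fin.consEquiv (fun _ : Fin (n + 1) => Bool)).sum_comp, Fintype.sum_prod_type,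
      Fintype.sum_bool, transfer_path, transfer_path, Finset.mul_sum, Finset.mul_sum]
  congr 1 <;>
  · refine Finset.sum_congr rfl fun x _ => ?_
    simp only [Fin.consEquiv, Equiv.coe_fn_mk, Fin.cons_zero, Complex.real_smul]
    push_cast
    ring

/-- The centered step. -/
noncomputable def gstep (a b c : ℝ) (x : Bool) : ℝ :=
  if x then c * (b / (a + b)) else -(c * (a / (a + b)))

/-- Approximate eigenfunction. -/
noncomputable def wfun (a b c θ : ℝ) (x : Bool) : ℂ :=
  1 + Complex.I * θ * (gstep a b c x / (a + b)) -
    θ ^ 2 * (1 / (a + b) * (1 / 2 + (1 - a - b) / (a + b)) *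
      ((gstep a b c x) ^ 2 - c ^ 2 * a * b / (a + b) ^ 2))

noncomputable def zfun (a b c θ : ℝ) (x : Bool) : ℂ :=
  Complex.exp ((θ * gstep a b c x : ℝ) * Complex.I)

open Filter Asymptotics Topology in
lemma exp_taylor (g : ℝ) :
    (fun θ : ℝ => Complex.exp ((θ * g : ℝ) * Complex.I) -
      (1 + Complex.I * θ * g - θ ^ 2 * g ^ 2 / 2)) =o[𝓝 0] fun θ => θ ^ 2 := by
  have h : (fun θ : ℝ => Complex.exp ((θ * g : ℝ) * Complex.I) -
      (1 + Complex.I * θ * g - θ ^ 2 * g ^ 2 / 2)) =O[𝓝 0] fun θ => θ ^ 3 := by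
    apply IsBigO.of_bound (|g| ^ 3)
    have hs : ∀ᶠ θ : ℝ in 𝓝 0, |θ * g| ≤ 1 := by
      have : Tendsto (fun θ : ℝ => |θ * g|) (𝓝 0) (𝓝 0) := by
        have : Continuous (fun θ : ℝ => |θ * g|) := by fun_prop
        simpa using this.tendsto 0
      exact this.eventually_le_const one_pos
    filter_upwards [hs] with θ hθ
    have hn : ‖((θ * g : ℝ) : ℂ) * Complex.I‖ = |θ * g| := by
      rw [norm_mul, Complex.norm_I, mul_one, Complex.norm_real, Real.norm_eq_abs]
    have := Complex.exp_bound (x := ((θ * g : ℝ) : ℂ) * Complex.I) (by rw [hn]; exact hθ)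
      (n := 3) (by norm_num)
    rw [hn] at this
    have e : ∑ m ∈ Finset.range 3, (((θ * g : ℝ) : ℂ) * Complex.I) ^ m / (m.factorial : ℂ)
        = 1 + Complex.I * θ * g - θ ^ 2 * g ^ 2 / 2 := by
      simp only [Finset.sum_range_succ, Finset.sum_range_zero, Nat.factorial]
      push_cast
      ring_nf
      rw [Complex.I_sq]
      ring
    rw [e] at this
    refine this.trans ?_
    rw [abs_mul, mul_pow, Real.norm_eq_abs, abs_pow]
    have : (0:ℝ) ≤ |θ| ^ 3 * |g| ^ 3 := by positivity
    norm_num [Nat.factorial]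
    nlinarith
  refine h.trans_isLittleO ?_
  exact isLittleO_pow_pow (by norm_num)

open Filter Asymptotics Topology in
lemma approx_eig {a b : ℝ} (c : ℝ) (ha0 : 0 < a) (hb0 : 0 < b) (x : Bool) :
    (fun θ : ℝ => transfer a b (zfun a b c θ) (wfun a b c θ) x -
      (1 - θ ^ 2 * (c ^ 2 * (a * b * (2 - a - b) / (a + b) ^ 3)) / 2) * wfun a b c θ x)
      =o[𝓝 0] fun θ => θ ^ 2 := by
  set g := gstep a b c x with hg
  have hab : ((a : ℂ) + b) ≠ 0 := by
    exact_mod_cast (by positivity : a + b ≠ 0)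
  have hwc : ∀ y, Continuous fun θ => wfun a b c θ y := by
    intro y; unfold wfun; fun_prop
  -- average of w
  let Pw : ℝ → ℂ := fun θ => (transProb a b x false : ℂ) * wfun a b c θ false
    + (transProb a b x true : ℂ) * wfun a b c θ true
  have hPwc : Continuous Pw := by
    have := hwc false
    have := hwc true
    fun_prop
  have hPw : Pw =O[𝓝 0] fun _ => (1 : ℝ) := (hPwc.tendsto 0).isBigO_one ℝ
  have h1 := (exp_taylor g).mul_isBigO hPw
  simp only [mul_one] at h1
  obtain ⟨q, hqc, hq⟩ : ∃ q : ℝ → ℂ, Continuous q ∧ ∀ θ : ℝ,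
      (1 + Complex.I * θ * g - θ ^ 2 * g ^ 2 / 2) * Pw θ -
      (1 - θ ^ 2 * (c ^ 2 * (a * b * (2 - a - b) / (a + b) ^ 3)) / 2) * wfun a b c θ x
      = ((θ ^ 3 : ℝ) : ℂ) * q θ := by
    -- coefficients
    let k : ℂ := 1 / (a + b) * (1 / 2 + (1 - a - b) / (a + b))
    let B : ℂ := -k * ((g : ℂ) ^ 2 - c ^ 2 * a * b / (a + b) ^ 2)
    let V : ℂ := c ^ 2 * (a * b * (2 - a - b) / (a + b) ^ 3)
    let r : ℂ := 1 - a - b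
    have hw : ∀ θ, wfun a b c θ x = 1 + Complex.I * θ * (g / (a + b)) + θ ^ 2 * B := by
      intro θ; simp only [wfun, B, k, ← hg]; ring
    have hP : ∀ θ, Pw θ = 1 + Complex.I * θ * (r * g / (a + b)) + θ ^ 2 * (r * B) := by
      intro θ
      simp only [Pw, B, k, r, wfun, hg]
      cases x <;> simp [transProb, gstep] <;> field_simp <;> ring
    have hV : (r - 1) * B = g ^ 2 / 2 + r * g ^ 2 / (a + b) - V / 2 := by
      simp only [B, k, r, V, hg]
      cases x <;> simp [gstep] <;> field_simp <;> ring
    refine ⟨fun θ => Complex.I * g * r * B - Complex.I * g ^ 3 * r / (a + b) / 2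
      + V / 2 * (Complex.I * (g / (a + b))) + θ * (V / 2 * B - g ^ 2 / 2 * r * B),
      by fun_prop, ?_⟩
    intro θ
    rw [hw, hP]
    change _ - (1 - θ ^ 2 * V / 2) * _ = _
    have hr : r = 1 - (a + b) := by simp only [r]; ring
    have h1 : Complex.I * θ * g + Complex.I * θ * (r * g / (a + b))
        - Complex.I * θ * (g / (a + b)) = 0 := by
      rw [hr]; field_simp; ring
    push_cast
    have hI := Complex.I_sq
    linear_combination h1 + (θ : ℂ) ^ 2 * hV + (θ : ℂ) ^ 2 * g ^ 2 * r / (a + b) * hI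
  have h2 : (fun θ : ℝ => ((θ ^ 3 : ℝ) : ℂ) * q θ) =o[𝓝 0] fun θ => θ ^ 2 := by
    have e1 : (fun θ : ℝ => ((θ ^ 3 : ℝ) : ℂ)) =o[𝓝 0] fun θ : ℝ => θ ^ 2 := by
      rw [← isLittleO_norm_left]
      simp only [Complex.norm_real]
      rw [isLittleO_norm_left]
      exact isLittleO_pow_pow (by norm_num)
    have := e1.mul_isBigO ((hqc.tendsto 0).isBigO_one ℝ)
    simpa using this
  refine (h1.add h2).congr_left ?_
  intro θ
  rw [← hq]
  simp only [transfer, zfun, Pw, ← hg]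
  ring

open Filter Asymptotics Topology in
lemma tendsto_theta (s : ℝ) : Tendsto (fun n : ℕ => s / √(n : ℝ)) atTop (𝓝 0) :=
  tendsto_const_nhds.div_atTop (Real.tendsto_sqrt_atTop.comp tendsto_natCast_atTop_atTop)

open Filter Asymptotics Topology in
lemma tendsto_iter {a b : ℝ} (c : ℝ) (ha0 : 0 < a) (ha1 : a < 1) (hb0 : 0 < b) (hb1 : b < 1)
    (s V : ℝ) (hV : V = c ^ 2 * (a * b * (2 - a - b) / (a + b) ^ 3)) (hV0 : 0 < V) (x : Bool) :
    Tendsto (fun n : ℕ => (transfer a b (zfun a b c (s / √n)))^[n] (fun _ => 1) x) atTop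
      (𝓝 (Complex.exp (-(V * s ^ 2 / 2) : ℝ))) := by
  have hθ := tendsto_theta s
  let e : ℝ → Bool → ℝ := fun θ y => ‖transfer a b (zfun a b c θ) (wfun a b c θ) y -
      (1 - θ ^ 2 * (c ^ 2 * (a * b * (2 - a - b) / (a + b) ^ 3)) / 2) * wfun a b c θ y‖
  let d : ℝ → Bool → ℝ := fun θ y => ‖1 - wfun a b c θ y‖
  have hsq : ∀ᶠ n : ℕ in atTop, (s / √(n:ℝ)) ^ 2 = s ^ 2 / n := by
    filter_upwards with n
    rw [div_pow, Real.sq_sqrt (Nat.cast_nonneg n)]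
  have he : ∀ y, Tendsto (fun n : ℕ => n * e (s / √n) y) atTop (𝓝 0) := by
    intro y
    have h := ((approx_eig c ha0 hb0 y).comp_tendsto hθ).norm_left
    have h3 : (fun n : ℕ => (n : ℝ) * e (s / √n) y) =o[atTop]
        fun n : ℕ => (n : ℝ) * (s / √(n:ℝ)) ^ 2 :=
      (isBigO_refl (fun n : ℕ => (n : ℝ)) atTop).mul_isLittleO h
    have h4 : (fun n : ℕ => (n : ℝ) * (s / √(n:ℝ)) ^ 2) =O[atTop] fun _ => (1 : ℝ) := by
      apply IsBigO.of_bound (s ^ 2)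
      filter_upwards [hsq, eventually_gt_atTop 0] with n hn h0
      rw [hn]
      have : (n : ℝ) ≠ 0 := by positivity
      rw [mul_div_cancel₀ _ this]
      simp
    exact (isLittleO_one_iff ℝ).1 (h3.trans_isBigO h4)
  have hd : ∀ y, Tendsto (fun n : ℕ => d (s / √n) y) atTop (𝓝 0) := by
    intro y
    have hc : Continuous fun θ => d θ y := by
      simp only [d]; unfold wfun; fun_prop
    have h0 : d 0 y = 0 := by simp [d, wfun]
    have := (hc.tendsto 0).comp hθ
    rwa [h0] at this
  have hlamlim : Tendsto (fun n : ℕ => (1 + ((-(V * s ^ 2 / 2) : ℝ) : ℂ) / n) ^ n) atTop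
      (𝓝 (Complex.exp (-(V * s ^ 2 / 2) : ℝ))) := Complex.tendsto_one_add_div_pow_exp _
  rw [← sub_add_cancel (fun n : ℕ => (transfer a b (zfun a b c (s / √n)))^[n] (fun _ => 1) x)
    (fun n : ℕ => (1 + ((-(V * s ^ 2 / 2) : ℝ) : ℂ) / n) ^ n), ← zero_add (Complex.exp _)]
  refine Tendsto.add ?_ hlamlim
  have hbound : Tendsto (fun n : ℕ => (n * e (s / √n) false + n * e (s / √n) true)
      + 2 * (d (s / √n) false + d (s / √n) true)) atTop (𝓝 0) := by
    have := ((he false).add (he true)).add (((hd false).add (hd true)).const_mul 2)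
    simpa using this
  refine squeeze_zero_norm' ?_ hbound
  have hsmall : ∀ᶠ n : ℕ in atTop, V * (s / √(n:ℝ)) ^ 2 / 2 ≤ 1 := by
    have : Tendsto (fun n : ℕ => V * (s / √(n:ℝ)) ^ 2 / 2) atTop (𝓝 0) := by
      have := ((hθ.pow 2).const_mul V).div_const 2
      simpa using this
    exact this.eventually_le_const one_pos
  filter_upwards [hsmall, hsq, eventually_gt_atTop 0] with n hn hs h0
  set θ := s / √(n:ℝ) with hθdef
  have hlam : (1 + ((-(V * s ^ 2 / 2) : ℝ) : ℂ) / n) = ((1 - V * θ ^ 2 / 2 : ℝ) : ℂ) := by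
    rw [hs]; push_cast; ring
  have hlam' : (1 - (θ:ℂ) ^ 2 * (c ^ 2 * (a * b * (2 - a - b) / (a + b) ^ 3)) / 2)
      = ((1 - V * θ ^ 2 / 2 : ℝ) : ℂ) := by
    rw [hV]; push_cast; ring
  have hlam1 : ‖((1 - V * θ ^ 2 / 2 : ℝ) : ℂ)‖ ≤ 1 := by
    rw [Complex.norm_real, Real.norm_eq_abs, abs_le]
    have : 0 ≤ V * θ ^ 2 / 2 := by positivity
    constructor <;> linarith
  have hz : ∀ y, ‖zfun a b c θ y‖ = 1 := fun y => Complex.norm_exp_ofReal_mul_I _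
  have he0 : ∀ y, 0 ≤ e θ y := fun y => norm_nonneg _
  have hd0 : ∀ y, 0 ≤ d θ y := fun y => norm_nonneg _
  have main := transfer_iter_close ha0 ha1 hb0 hb1 hz (w := wfun a b c θ)
    (lam := ((1 - V * θ ^ 2 / 2 : ℝ) : ℂ)) (ε := e θ false + e θ true)
    (δ := d θ false + d θ true) hlam1
    (by
      intro y
      rw [← hlam']
      change e θ y ≤ _
      cases y
      · linarith [he0 true]
      · linarith [he0 false])
    (by
      intro y
      change d θ y ≤ _
      cases y
      · linarith [hd0 true]
      · linarith [hd0 false]) n x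
  rw [Pi.sub_apply, hlam]
  set l : ℂ := ((1 - V * θ ^ 2 / 2 : ℝ) : ℂ)
  have h5 : ‖l ^ n * (1 - wfun a b c θ x)‖ ≤ d θ false + d θ true := by
    rw [norm_mul, norm_pow]
    calc _ ≤ 1 * d θ x := by
          refine mul_le_mul (pow_le_one₀ (norm_nonneg _) hlam1) le_rfl (norm_nonneg _) zero_le_one
      _ ≤ _ := by
        cases x
        · linarith [hd0 true]
        · linarith [hd0 false]
  have h6 : (transfer a b (zfun a b c θ))^[n] (fun _ => 1) x - l ^ n =
      ((transfer a b (zfun a b c θ))^[n] (fun _ => 1) x - l ^ n * wfun a b c θ x)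
      - l ^ n * (1 - wfun a b c θ x) := by ring
  rw [h6]
  refine (norm_sub_le _ _).trans ?_
  linarith

open Filter ProbabilityTheory BoundedContinuousFunction in
/-- central limit theorem for the block d-tilted sum. For a stationary
binary Markov chain with `a ≠ b`, `(J_n(D) - n μ_D)/√n` converges in distribution
(weak convergence tested against bounded continuous functions) to the centered
Gaussian law with variance `V_sl = (a b (2-a-b)/(a+b)³) log₂²(a/b) > 0`; the limit
does not depend on `D`. -/
theorem stmt_19 {Ω : Type*} [MeasurableSpace Ω] (μ : Measure Ω) [IsProbabilityMeasure μ]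
    (a b D : ℝ) (ha0 : 0 < a) (ha1 : a < 1) (hb0 : 0 < b) (hb1 : b < 1)
    (hab : a ≠ b)
    (hD0 : 0 < D) (hD : D < min (b / (a + b)) (a / (a + b)))
    (X : ℕ → Ω → Bool) (hX : ∀ t, Measurable (X t))
    (hM : IsStatBinMarkov μ X a b)
    (Vsl : ℝ)
    (hV : Vsl = a * b * (2 - a - b) / (a + b) ^ 3 * (Real.logb 2 (a / b)) ^ 2) :
    0 < Vsl
    ∧ ∀ f : ℝ →ᵇ ℝ,
        Tendsto
          (fun n : ℕ =>
            ∫ ω, f (((∑ t ∈ Finset.range n, jTilt a b D (X t ω))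
                - n * (binEntropy2 (a / (a + b)) - binEntropy2 D)) / Real.sqrt n) ∂μ)
          atTop
          (nhds (∫ x, f x ∂(gaussianReal 0 (Real.toNNReal Vsl)))) := by
  have hab0 : 0 < a + b := by positivity
  have hlog : Real.logb 2 (a / b) ≠ 0 := by
    have h1 : 0 < a / b := by positivity
    have h2 : a / b ≠ 1 := by
      intro h
      exact hab ((div_eq_one_iff_eq hb0.ne').1 h)
    exact Real.logb_ne_zero_of_pos_of_ne_one (by norm_num) h1 h2
  have hVpos : 0 < Vsl := by
    rw [hV]
    have : 0 < 2 - a - b := by linarith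
    positivity
  refine ⟨hVpos, ?_⟩
  set c : ℝ := Real.logb 2 (b / (a + b)) - Real.logb 2 (a / (a + b)) with hc
  have hcl : c = - Real.logb 2 (a / b) := by
    rw [hc, Real.logb_div hb0.ne' hab0.ne', Real.logb_div ha0.ne' hab0.ne',
      Real.logb_div ha0.ne' hb0.ne']
    ring
  have hV' : Vsl = c ^ 2 * (a * b * (2 - a - b) / (a + b) ^ 3) := by
    rw [hV, hcl]; ring
  have hj : ∀ x, jTilt a b D x = gstep a b c x + (binEntropy2 (a / (a + b)) - binEntropy2 D) := by
    intro x
    have h1 : 1 - a / (a + b) = b / (a + b) := by field_simp; ring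
    have h2 : a / (a + b) = 1 - b / (a + b) := by field_simp; ring
    unfold jTilt gstep statDist
    have : binEntropy2 (a / (a + b)) = -(a / (a + b)) * Real.logb 2 (a / (a + b))
        - (b / (a + b)) * Real.logb 2 (b / (a + b)) := by
      rw [binEntropy2, h1]
    rw [this, hc]
    cases x <;> simp only [if_true, if_false, Bool.false_eq_true] <;>
    generalize Real.logb 2 (a / (a + b)) = L1 <;>
    generalize Real.logb 2 (b / (a + b)) = L0 <;>
    rw [h2] <;> ring
  let S : ℕ → Ω → ℝ := fun n ω => ((∑ t ∈ Finset.range n, jTilt a b D (X t ω))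
                - n * (binEntropy2 (a / (a + b)) - binEntropy2 D)) / Real.sqrt n
  have hS : ∀ n ω, S n ω = (∑ t ∈ Finset.range n, gstep a b c (X t ω)) / Real.sqrt n := by
    intro n ω
    simp only [S, hj, Finset.sum_add_distrib, Finset.sum_const, Finset.card_range, nsmul_eq_mul]
    ring
  have hSm : ∀ n, Measurable (S n) := by
    intro n
    refine Measurable.div_const (Measurable.sub_const ?_ _) _
    exact Finset.measurable_fun_sum _ fun t _ => (measurable_of_finite (jTilt a b D)).comp (hX t)
  let ν : ℕ → ProbabilityMeasure ℝ := fun n =>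
    ⟨μ.map (S n), Measure.isProbabilityMeasure_map (hSm n).aemeasurable⟩
  let ν₀ : ProbabilityMeasure ℝ := ⟨gaussianReal 0 (Real.toNNReal Vsl), inferInstance⟩
  have hconv : Tendsto ν atTop (nhds ν₀) := by
    refine ProbabilityMeasure.tendsto_iff_tendsto_charFun.2 fun s => ?_
    have hlim : charFun (ν₀ : Measure ℝ) s = Complex.exp (-(Vsl * s ^ 2 / 2) : ℝ) := by
      change charFun (gaussianReal 0 (Real.toNNReal Vsl)) s = _
      rw [charFun_gaussianReal]
      congr 1
      have : ((Real.toNNReal Vsl : ℝ) : ℂ) = (Vsl : ℂ) := by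
        rw [Real.coe_toNNReal _ hVpos.le]
      push_cast
      rw [this]
      ring
    rw [hlim]
    have h1 := tendsto_iter c ha0 ha1 hb0 hb1 s Vsl hV' hVpos true
    have h0 := tendsto_iter c ha0 ha1 hb0 hb1 s Vsl hV' hVpos false
    have h2 := (h1.const_mul (statDist a b true : ℂ)).add (h0.const_mul (statDist a b false : ℂ))
    have hsum : (statDist a b true : ℂ) + statDist a b false = 1 := by
      have : statDist a b true + statDist a b false = 1 := by
        simp only [statDist]; simp; field_simp
      exact_mod_cast this
    rw [← add_mul, hsum, one_mul] at h2
    refine h2.congr' ?_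
    filter_upwards [eventually_gt_atTop 0] with n hn
    obtain ⟨m, rfl⟩ : ∃ m, n = m + 1 := ⟨n - 1, by omega⟩
    rw [← integral_prod_eq μ ha0 ha1 hb0 hb1 X hX hM]
    change _ = charFun (μ.map (S (m + 1))) s
    rw [charFun_apply_real, integral_map (hSm _).aemeasurable
      (by fun_prop)]
    refine integral_congr_ae (Eventually.of_forall fun ω => ?_)
    simp only [zfun]
    rw [← Complex.exp_sum, hS]
    congr 1
    push_cast
    rw [← Finset.sum_mul, ← Finset.mul_sum]
    ring
  intro f
  have := (ProbabilityMeasure.tendsto_iff_forall_integral_tendsto.1 hconv) f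
  refine this.congr fun n => ?_
  change ∫ x, f x ∂(μ.map (S n)) = _
  rw [integral_map (hSm n).aemeasurable f.continuous.aestronglyMeasurable]
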